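/- Let h₀ > 0 and t₁ < t₂ be real numbers, and let u, v, w : [t₁,t₂] → ℝ be functions such that u and w are differentiable, u(t) ≥ 0, v(t) ≥ 0, w(t) > 0, u'(t) ≤ h₀·u(t) + v(t)/h₀, and w'(t) ≤ −2h₀·w(t) for all t ∈ [t₁,t₂], with v·w integrable. Then ∫_{t₁}^{t₂} v(t) w(t) dt ≥ h₀·(u(t₂)w(t₂) − u(t₁)w(t₁)) + h₀² ∫_{t₁}^{t₂} u(t) w(t) dt. -/

import Mathlib

/-- One-dimensional slice estimate for 1-forms: with u ≥ 0, v ≥ 0, w > 0,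
u' ≤ h₀u + v/h₀ and w' ≤ −2h₀w on [t₁,t₂], one has
∫ v w ≥ h₀(u(t₂)w(t₂) − u(t₁)w(t₁)) + h₀² ∫ u w. -/
theorem slice_estimate_one_forms
    (h₀ t₁ t₂ : ℝ) (hh₀ : h₀ > 0) (ht : t₁ < t₂)
    (u v w u' w' : ℝ → ℝ)
    (hu : ∀ t ∈ Set.Icc t₁ t₂, HasDerivAt u (u' t) t)
    (hw : ∀ t ∈ Set.Icc t₁ t₂, HasDerivAt w (w' t) t)
    (hu0 : ∀ t ∈ Set.Icc t₁ t₂, 0 ≤ u t)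
    (hv0 : ∀ t ∈ Set.Icc t₁ t₂, 0 ≤ v t)
    (hwpos : ∀ t ∈ Set.Icc t₁ t₂, 0 < w t)
    (hu' : ∀ t ∈ Set.Icc t₁ t₂, u' t ≤ h₀ * u t + v t / h₀)
    (hw' : ∀ t ∈ Set.Icc t₁ t₂, w' t ≤ -2 * h₀ * w t)
    (hvw : IntervalIntegrable (fun t => v t * w t) MeasureTheory.volume t₁ t₂) :
    ∫ t in t₁..t₂, v t * w t ≥
      h₀ * (u t₂ * w t₂ - u t₁ * w t₁) + h₀ ^ 2 * ∫ t in t₁..t₂, u t * w t := by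
  have cont : ContinuousOn (fun t => u t * w t) (Set.Icc t₁ t₂) := fun t h =>
    ((hu t h).mul (hw t h)).continuousAt.continuousWithinAt
  have huw : IntervalIntegrable (fun t => u t * w t) MeasureTheory.volume t₁ t₂ :=
    ContinuousOn.intervalIntegrable_of_Icc ht.le cont
  have hφ := hvw.sub (huw.const_mul (h₀ ^ 2))
  have key := intervalIntegral.sub_le_integral_of_hasDeriv_right_of_le
    (g := fun t => h₀ * (u t * w t)) (g' := fun t => h₀ * (u' t * w t + u t * w' t))
    (φ := fun t => v t * w t - h₀ ^ 2 * (u t * w t)) ht.le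
    (continuousOn_const.mul cont)
    (fun t h => (((hu t (Set.Ioo_subset_Icc_self h)).mul
      (hw t (Set.Ioo_subset_Icc_self h))).const_mul h₀).hasDerivWithinAt)
    ((intervalIntegrable_iff_integrableOn_Icc_of_le ht.le).1 hφ)
    (fun t h => by
      have h := Set.Ioo_subset_Icc_self h
      have h1 := mul_le_mul_of_nonneg_right (hu' t h) (mul_pos hh₀ (hwpos t h)).le
      have h2 := mul_le_mul_of_nonneg_left (hw' t h) (mul_nonneg hh₀.le (hu0 t h))
      have h3 : (h₀ * u t + v t / h₀) * (h₀ * w t) = h₀ ^ 2 * (u t * w t) + v t * w t := by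
        field_simp
      rw [h3] at h1
      show h₀ * (u' t * w t + u t * w' t) ≤ v t * w t - h₀ ^ 2 * (u t * w t)
      linarith)
  rw [intervalIntegral.integral_sub hvw (huw.const_mul (h₀ ^ 2)),
    intervalIntegral.integral_const_mul] at key
  linarith
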